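/- The following problem is undecidable: given a fact base F, a rule set R that is the union of an aGRD set of existential rules and a single transitivity rule, and an atomic Boolean conjunctive query Q, decide whether F, R ⊨ Q. (Atomic CQ entailment over aGRD+trans knowledge bases is undecidable, even with a single transitivity rule.) -/

import Mathlib

set_option autoImplicit false

/-! ## First-order vocabulary: terms, atoms, existential rules -/

/-- Terms: variables and constants, both indexed by natural numbers. -/
inductive FTerm where
  | var : ℕ → FTerm
  | const : ℕ → FTerm
deriving DecidableEq

instance : Inhabited FTerm := ⟨.var 0⟩

def FTerm.equivSum : FTerm ≃ ℕ ⊕ ℕ where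
  toFun t := match t with | .var n => .inl n | .const n => .inr n
  invFun s := match s with | .inl n => .var n | .inr n => .const n
  left_inv t := by cases t <;> rfl
  right_inv s := by cases s <;> rfl

instance : Primcodable FTerm := Primcodable.ofEquiv (ℕ ⊕ ℕ) FTerm.equivSum

/-- A (function-free) atom: a predicate applied to a list of terms. -/
structure FAtom where
  pred : ℕ
  args : List FTerm
deriving DecidableEq

def FAtom.equivProd : FAtom ≃ ℕ × List FTerm where
  toFun a := (a.pred, a.args)
  invFun p := ⟨p.1, p.2⟩
  left_inv a := rfl
  right_inv p := rfl

instance : Primcodable FAtom := Primcodable.ofEquiv (ℕ × List FTerm) FAtom.equivProd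

/-- An existential rule `B → H`, given by its body and head (finite conjunctions of atoms).
Variables occurring in the head but not in the body are (implicitly) existentially
quantified; all other variables are universally quantified. -/
structure ERule where
  body : List FAtom
  head : List FAtom
deriving DecidableEq

def ERule.equivProd : ERule ≃ List FAtom × List FAtom where
  toFun r := (r.body, r.head)
  invFun p := ⟨p.1, p.2⟩
  left_inv r := rfl
  right_inv p := rfl

instance : Primcodable ERule := Primcodable.ofEquiv (List FAtom × List FAtom) ERule.equivProd

/-! ## Semantics -/

/-- A first-order interpretation. -/
structure Interp where
  Dom : Type
  inh : Nonempty Dom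
  rel : ℕ → List Dom → Prop
  cst : ℕ → Dom

def FTerm.eval (I : Interp) (ν : ℕ → I.Dom) : FTerm → I.Dom
  | .var n => ν n
  | .const n => I.cst n

def FAtom.sat (I : Interp) (ν : ℕ → I.Dom) (a : FAtom) : Prop :=
  I.rel a.pred (a.args.map (FTerm.eval I ν))

/-- Satisfaction of a Boolean conjunctive query (existential closure of a conjunction). -/
def satCQ (I : Interp) (Q : List FAtom) : Prop := ∃ ν, ∀ a ∈ Q, a.sat I ν

def satFacts (I : Interp) (F : List FAtom) : Prop := ∀ ν, ∀ a ∈ F, a.sat I ν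

def atomsVars (l : List FAtom) : Set ℕ := {v | ∃ a ∈ l, FTerm.var v ∈ a.args}
def atomsTerms (l : List FAtom) : Set FTerm := {t | ∃ a ∈ l, t ∈ a.args}
def atomsPreds (l : List FAtom) : Set ℕ := {q | ∃ a ∈ l, a.pred = q}
def rulesPreds (Rs : List ERule) : Set ℕ := {q | ∃ r ∈ Rs, q ∈ atomsPreds (r.body ++ r.head)}
def atomsConsts (l : List FAtom) : Set ℕ := {c | FTerm.const c ∈ atomsTerms l}

/-- Frontier variables of a rule. -/
def ERule.frontierV (R : ERule) : Set ℕ := atomsVars R.body ∩ atomsVars R.head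
/-- Existential variables of a rule. -/
def ERule.exV (R : ERule) : Set ℕ := atomsVars R.head \ atomsVars R.body

def ERule.sat (I : Interp) (R : ERule) : Prop :=
  ∀ ν, (∀ a ∈ R.body, a.sat I ν) →
    ∃ ν', (∀ v ∈ atomsVars R.body, ν' v = ν v) ∧ ∀ a ∈ R.head, a.sat I ν'

/-- First-order entailment of a Boolean CQ from a knowledge base. -/
def entails (F : List FAtom) (Rs : List ERule) (Q : List FAtom) : Prop :=
  ∀ I : Interp, satFacts I F → (∀ r ∈ Rs, r.sat I) → satCQ I Q

/-- First-order entailment of a union of Boolean CQs. -/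
def entailsUCQ (F : List FAtom) (Rs : List ERule) (Qs : List (List FAtom)) : Prop :=
  ∀ I : Interp, satFacts I F → (∀ r ∈ Rs, r.sat I) → ∃ Q ∈ Qs, satCQ I Q

def FAtom.isGround (a : FAtom) : Prop := ∀ t ∈ a.args, ∃ c, t = FTerm.const c
def isFactBase (F : List FAtom) : Prop := ∀ a ∈ F, a.isGround

/-! ## Substitutions and piece-unifiers -/

def FTerm.subst (σ : ℕ → FTerm) : FTerm → FTerm
  | .var n => σ n
  | .const n => .const n

def FAtom.subst (σ : ℕ → FTerm) (a : FAtom) : FAtom := ⟨a.pred, a.args.map (FTerm.subst σ)⟩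

/-- A piece-unifier of a CQ `Q` with a rule `R`, presented by a unifying substitution `σ`
(obtained from the admissible partition of the terms of `piece ∪ hpiece`):
`σ(piece) = σ(hpiece)` and every term merged with an existential variable of `R`
is a variable of the piece not occurring in the rest of `Q`. -/
structure PieceUnifier (Q : List FAtom) (R : ERule) where
  piece : List FAtom
  hpiece : List FAtom
  σ : ℕ → FTerm
  piece_ne : piece ≠ []
  piece_sub : ∀ a ∈ piece, a ∈ Q
  hpiece_sub : ∀ a ∈ hpiece, a ∈ R.head
  unif : {x : FAtom | ∃ b ∈ piece, x = b.subst σ} = {x : FAtom | ∃ b ∈ hpiece, x = b.subst σ}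
  exCond : ∀ z ∈ R.exV, ∀ t ∈ atomsTerms (piece ++ hpiece),
      FTerm.subst σ t = σ z → t ≠ FTerm.var z →
      ∃ v, t = FTerm.var v ∧ FTerm.var v ∈ atomsTerms piece ∧
        FTerm.var v ∉ atomsTerms (Q.filter (fun a => decide (a ∉ piece)))

def pieceUnifiable (Q : List FAtom) (R : ERule) : Prop := Nonempty (PieceUnifier Q R)

/-- `R₂` depends on `R₁` if there is a piece-unifier of the body of `R₂` with the head of `R₁`. -/
def ruleDependsOn (R₂ R₁ : ERule) : Prop := pieceUnifiable R₂.body R₁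

/-- A rule set is aGRD if its graph of rule dependencies (edge from `R₁` to `R₂`
whenever `R₂` depends on `R₁`) is acyclic. -/
def isAGRD (Rs : List ERule) : Prop :=
  ∀ r ∈ Rs, ¬ Relation.TransGen (fun r₁ r₂ => r₁ ∈ Rs ∧ r₂ ∈ Rs ∧ ruleDependsOn r₂ r₁) r r

/-- The (classical) direct rewriting of `Q` with `R` w.r.t. a piece-unifier `μ`
is `σ(Q ∖ piece) ∪ σ(body R)` (as a set of atoms). -/
def directRewriting (Q Q' : List FAtom) (R : ERule) : Prop :=
  ∃ μ : PieceUnifier Q R,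
    {x : FAtom | x ∈ Q'} =
      {x | ∃ b ∈ Q.filter (fun a => decide (a ∉ μ.piece)), x = b.subst μ.σ} ∪
      {x | ∃ b ∈ R.body, x = b.subst μ.σ}

/-- `Q'` is a rewriting of `Q` w.r.t. the rule set `Rs`: a finite sequence of direct rewritings. -/
def isRewriting (Rs : List ERule) (Q Q' : List FAtom) : Prop :=
  Relation.ReflTransGen (fun q q' => ∃ r ∈ Rs, directRewriting q q' r) Q Q'

/-! ## Transitivity and linear rules -/

/-- `R` is the transitivity rule `p(x,y) ∧ p(y,z) → p(x,z)` for predicate `p`. -/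
def isTransitivityRuleOn (p : ℕ) (R : ERule) : Prop :=
  ∃ x y z : ℕ, x ≠ y ∧ y ≠ z ∧ x ≠ z ∧
    R.body = [⟨p, [.var x, .var y]⟩, ⟨p, [.var y, .var z]⟩] ∧
    R.head = [⟨p, [.var x, .var z]⟩]

def isTransitivityRule (R : ERule) : Prop := ∃ p, isTransitivityRuleOn p R

/-- A canonical transitivity rule for predicate `p`. -/
def transRule (p : ℕ) : ERule :=
  ⟨[⟨p, [.var 0, .var 1]⟩, ⟨p, [.var 1, .var 2]⟩], [⟨p, [.var 0, .var 2]⟩]⟩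

/-- A linear rule: single-atom body and no constants. -/
def isLinearRule (R : ERule) : Prop :=
  (∃ a, R.body = [a]) ∧ ∀ t ∈ atomsTerms (R.body ++ R.head), ∀ c, t ≠ FTerm.const c

namespace AgrdTrans

open Nat.Partrec (Code)
open Nat.Partrec.Code (eval)

/-- A Horn clause over variables indexed by naturals. -/
structure Clause where
  body : List (ℕ × List ℕ)
  head : ℕ × List ℕ

def encV (v : ℕ) : FTerm := FTerm.var (2 * v + 2)
def encU (a : ℕ × List ℕ) : FTerm := FTerm.var (2 * Encodable.encode a + 3)
def encA (a : ℕ × List ℕ) : List FAtom :=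
  [⟨a.1 + 1, encU a :: a.2.map encV⟩, ⟨0, [encU a, FTerm.const 0]⟩]

def Clause.toRule (c : Clause) : ERule :=
  ⟨c.body.flatMap encA,
   [⟨c.head.1 + 1, FTerm.var 0 :: c.head.2.map encV⟩, ⟨0, [FTerm.var 0, FTerm.var 1]⟩,
    ⟨0, [FTerm.var 1, FTerm.const 0]⟩]⟩

theorem body_var_ge (c : Clause) (v : ℕ) (h : FTerm.var v ∈ atomsTerms c.toRule.body) :
    2 ≤ v := by
  obtain ⟨a, ha, hv⟩ := h
  simp only [Clause.toRule, List.mem_flatMap] at ha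
  obtain ⟨b, hb, hab⟩ := ha
  simp only [encA, List.mem_cons, List.not_mem_nil, or_false] at hab
  rcases hab with rfl | rfl
  · simp [encU, encV] at hv
    rcases hv with h | ⟨x, hx, h⟩ <;> omega
  · simp [encU] at hv
    omega

theorem mem_exV (c : Clause) : 0 ∈ c.toRule.exV ∧ 1 ∈ c.toRule.exV := by
  refine ⟨⟨⟨⟨0, [FTerm.var 0, FTerm.var 1]⟩, ?_, ?_⟩, ?_⟩,
    ⟨⟨⟨0, [FTerm.var 0, FTerm.var 1]⟩, ?_, ?_⟩, ?_⟩⟩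
  · simp [Clause.toRule]
  · simp
  · intro h
    have := body_var_ge c 0 h
    omega
  · simp [Clause.toRule]
  · simp
  · intro h
    have := body_var_ge c 1 h
    omega

/-- No encoded clause depends on an encoded clause. -/
theorem no_dep (c₂ c₁ : Clause) : ¬ ruleDependsOn c₂.toRule c₁.toRule := by
  rintro ⟨μ⟩
  obtain ⟨hx0, hx1⟩ := mem_exV c₁
  have hpv : ∀ v, FTerm.var v ∈ atomsTerms μ.piece → 2 ≤ v := by
    rintro v ⟨a, ha, hv⟩
    exact body_var_ge c₂ v ⟨a, μ.piece_sub a ha, hv⟩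
  have hun : ∀ b ∈ μ.piece, ∃ h ∈ μ.hpiece, b.subst μ.σ = h.subst μ.σ := by
    intro b hb
    have : b.subst μ.σ ∈ {x : FAtom | ∃ b ∈ μ.hpiece, x = b.subst μ.σ} := by
      rw [← μ.unif]; exact ⟨b, hb, rfl⟩
    exact this
  have hT : ∀ l : List FAtom, (∀ a ∈ l, a ∈ μ.piece ∨ a ∈ μ.hpiece) →
      ∀ a ∈ l, ∀ t ∈ a.args, t ∈ atomsTerms (μ.piece ++ μ.hpiece) := by
    intro l hl a ha t ht
    exact ⟨a, by simpa using hl a ha, ht⟩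
  -- an atom of the first kind in the piece
  have hA : ∀ a : ℕ × List ℕ,
      (⟨a.1 + 1, encU a :: a.2.map encV⟩ : FAtom) ∈ μ.piece →
      FTerm.subst μ.σ (encU a) = μ.σ 0 ∧ FTerm.var 0 ∈ atomsTerms (μ.piece ++ μ.hpiece) ∧
      encU a ∈ atomsTerms (μ.piece ++ μ.hpiece) := by
    intro a ha
    obtain ⟨h, hh, he⟩ := hun _ ha
    have hm := μ.hpiece_sub h hh
    simp only [Clause.toRule, List.mem_cons, List.not_mem_nil, or_false] at hm
    rcases hm with rfl | rfl | rfl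
    · simp only [FAtom.subst, FAtom.mk.injEq, List.map_cons, List.cons.injEq] at he
      refine ⟨he.2.1, ⟨_, List.mem_append_right _ hh, by simp⟩,
        ⟨_, List.mem_append_left _ ha, by simp⟩⟩
    · simp [FAtom.subst] at he
    · simp [FAtom.subst] at he
  have hP : ∀ a ∈ c₂.body, (⟨0, [encU a, FTerm.const 0]⟩ : FAtom) ∈ μ.piece → False := by
    intro a hac ha
    obtain ⟨h, hh, he⟩ := hun _ ha
    have hm := μ.hpiece_sub h hh
    simp only [Clause.toRule, List.mem_cons, List.not_mem_nil, or_false] at hm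
    rcases hm with rfl | rfl | rfl
    · simp [FAtom.subst] at he
    · simp only [FAtom.subst, FAtom.mk.injEq, List.map_cons, List.cons.injEq] at he
      obtain ⟨v, hv, -⟩ := μ.exCond 1 hx1 (FTerm.const 0)
        ⟨_, List.mem_append_left _ ha, by simp⟩ he.2.2.1 (by simp)
      cases hv
    · simp only [FAtom.subst, FAtom.mk.injEq, List.map_cons, List.cons.injEq] at he
      have he1 : FTerm.subst μ.σ (encU a) = μ.σ 1 := he.2.1
      obtain ⟨v, hv, -, hnot⟩ := μ.exCond 1 hx1 (encU a)
        ⟨_, List.mem_append_left _ ha, by simp⟩ he1 (by simp [encU])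
      have hin : (⟨a.1 + 1, encU a :: a.2.map encV⟩ : FAtom) ∈ μ.piece := by
        by_contra hn
        apply hnot
        refine ⟨_, List.mem_filter.2 ⟨?_, decide_eq_true hn⟩, ?_⟩
        · exact List.mem_flatMap.2 ⟨a, hac, by simp [encA]⟩
        · simp [hv]
      obtain ⟨h0, ht0, -⟩ := hA a hin
      obtain ⟨w, hw, hwp, -⟩ := μ.exCond 1 hx1 (FTerm.var 0) ht0 (h0.symm.trans he1) (by simp)
      cases hw
      have := hpv 0 hwp
      omega
  obtain ⟨b, hb⟩ := List.exists_mem_of_ne_nil _ μ.piece_ne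
  have hbb := μ.piece_sub b hb
  obtain ⟨a, hac, hab⟩ := List.mem_flatMap.1 hbb
  simp only [encA, List.mem_cons, List.not_mem_nil, or_false] at hab
  rcases hab with rfl | rfl
  · obtain ⟨h0, -, ht⟩ := hA a hb
    obtain ⟨v, hv, -, hnot⟩ := μ.exCond 0 hx0 (encU a) ht h0 (by simp [encU])
    apply hP a hac
    by_contra hn
    apply hnot
    refine ⟨_, List.mem_filter.2 ⟨?_, decide_eq_true hn⟩, ?_⟩
    · exact List.mem_flatMap.2 ⟨a, hac, by simp [encA]⟩
    · simp [hv]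
  · exact hP a hac hb

theorem agrd (cs : List Clause) : isAGRD (cs.map Clause.toRule) := by
  intro r _ h
  obtain ⟨s, -, h1, h2, h3⟩ := Relation.TransGen.tail'_iff.1 h
  obtain ⟨c1, -, rfl⟩ := List.mem_map.1 h1
  obtain ⟨c2, -, rfl⟩ := List.mem_map.1 h2
  exact no_dep _ _ h3

/-! ### Semantics of encoded clauses -/

def holds (J : Interp) (q : ℕ) (l : List J.Dom) : Prop :=
  ∃ u, J.rel (q + 1) (u :: l) ∧ J.rel 0 [u, J.cst 0]

theorem trans_sat {J : Interp} (h : (transRule 0).sat J) {x y z : J.Dom}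
    (h1 : J.rel 0 [x, y]) (h2 : J.rel 0 [y, z]) : J.rel 0 [x, z] := by
  obtain ⟨ν', h3, h4⟩ := h (fun k => if k = 0 then x else if k = 1 then y else z) (by
    intro a ha
    simp only [transRule, List.mem_cons, List.not_mem_nil, or_false] at ha
    rcases ha with rfl | rfl <;> simpa [FAtom.sat, FTerm.eval])
  have e0 := h3 0 ⟨⟨0, [.var 0, .var 1]⟩, by simp [transRule], by simp⟩
  have e2 := h3 2 ⟨⟨0, [.var 1, .var 2]⟩, by simp [transRule], by simp⟩
  have := h4 _ (by simp [transRule]; rfl)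
  simpa [FAtom.sat, FTerm.eval, e0, e2] using this

open Classical in
theorem clause_complete {J : Interp} (ht : (transRule 0).sat J) (c : Clause)
    (hs : c.toRule.sat J) (val : ℕ → J.Dom)
    (hb : ∀ a ∈ c.body, holds J a.1 (a.2.map val)) :
    ∃ val' : ℕ → J.Dom, (∀ a ∈ c.body, ∀ v ∈ a.2, val' v = val v) ∧
      holds J c.head.1 (c.head.2.map val') := by
  let w : ℕ × List ℕ → J.Dom := fun a =>
    if h : holds J a.1 (a.2.map val) then h.choose else J.cst 0
  have hw : ∀ a ∈ c.body, J.rel (a.1 + 1) (w a :: a.2.map val) ∧ J.rel 0 [w a, J.cst 0] := by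
    intro a ha
    have := hb a ha
    simp only [w, dif_pos this]
    exact this.choose_spec
  let ν : ℕ → J.Dom := fun k => if k % 2 = 0 then val (k / 2 - 1) else
    match (Encodable.decode ((k - 3) / 2) : Option (ℕ × List ℕ)) with
    | some a => w a
    | none => J.cst 0
  have hνv : ∀ v, ν (2 * v + 2) = val v := by
    intro v
    have h1 : (2 * v + 2) % 2 = 0 := by omega
    have h2 : (2 * v + 2) / 2 - 1 = v := by omega
    simp only [ν, h1, h2, if_true]
  have hνu : ∀ a, ν (2 * Encodable.encode a + 3) = w a := by
    intro a
    have h1 : ¬ (2 * Encodable.encode a + 3) % 2 = 0 := by omega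
    have h2 : (2 * Encodable.encode a + 3 - 3) / 2 = Encodable.encode a := by omega
    simp only [ν, h1, h2, if_false, Encodable.encodek]
  obtain ⟨ν', h1, h2⟩ := hs ν (by
    intro x hx
    obtain ⟨a, ha, hxa⟩ := List.mem_flatMap.1 hx
    have hwa := hw a ha
    simp only [encA, List.mem_cons, List.not_mem_nil, or_false] at hxa
    rcases hxa with rfl | rfl
    · have : List.map (FTerm.eval J ν ∘ encV) a.2 = a.2.map val := by
        apply List.map_congr_left
        intro v _
        simp [encV, FTerm.eval, hνv]
      simpa [FAtom.sat, encU, FTerm.eval, hνu, this] using hwa.1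
    · simpa [FAtom.sat, encU, FTerm.eval, hνu] using hwa.2)
  refine ⟨fun v => ν' (2 * v + 2), ?_, ν' 0, ?_, ?_⟩
  · intro a ha v hv
    rw [← hνv v]
    apply h1
    refine ⟨⟨a.1 + 1, encU a :: a.2.map encV⟩, List.mem_flatMap.2 ⟨a, ha, by simp [encA]⟩, ?_⟩
    exact List.mem_cons_of_mem _ (List.mem_map.2 ⟨v, hv, rfl⟩)
  · have := h2 ⟨c.head.1 + 1, FTerm.var 0 :: c.head.2.map encV⟩ (by simp [Clause.toRule])
    have e : List.map (FTerm.eval J ν' ∘ encV) c.head.2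
        = c.head.2.map (fun v => ν' (2 * v + 2)) := by
      apply List.map_congr_left
      intro v _
      simp [encV, FTerm.eval]
    simpa [FAtom.sat, FTerm.eval, e] using this
  · have a1 := h2 ⟨0, [FTerm.var 0, FTerm.var 1]⟩ (by simp [Clause.toRule])
    have a2 := h2 ⟨0, [FTerm.var 1, FTerm.const 0]⟩ (by simp [Clause.toRule])
    simp only [FAtom.sat, List.map_cons, List.map_nil, FTerm.eval] at a1 a2
    exact trans_sat ht a1 a2

/-- Validity of a Datalog clause in a structure. -/
def Closed {D : Type} (H : ℕ → List D → Prop) (c : Clause) : Prop :=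
  ∀ val : ℕ → D, (∀ a ∈ c.body, H a.1 (a.2.map val)) → H c.head.1 (c.head.2.map val)

def Datalog (c : Clause) : Prop := c.head.2 ⊆ c.body.flatMap Prod.snd

theorem closed_of_sat {J : Interp} (ht : (transRule 0).sat J) (c : Clause)
    (hs : c.toRule.sat J) (hd : Datalog c) : Closed (holds J) c := by
  intro val hb
  obtain ⟨val', h1, h2⟩ := clause_complete ht c hs val hb
  have : c.head.2.map val' = c.head.2.map val := by
    apply List.map_congr_left
    intro v hv
    obtain ⟨a, ha, hva⟩ := List.mem_flatMap.1 (hd hv)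
    exact h1 a ha v hva
  rwa [this] at h2

/-- The intended interpretation. -/
def stdRel : ℕ → List ℕ → Prop
  | 0, [x] => x = 0
  | 1, [x, y] => y = x + 1
  | 2, [x, y] => x < y
  | 3, [a, b, x] => x = Nat.pair a b
  | q + 4, [x, y] => y ∈ eval (Denumerable.ofNat Code q) x
  | _, _ => False

def stdI : Interp where
  Dom := ℕ
  inh := ⟨0⟩
  rel := fun q l => match q with
    | 0 => True
    | q + 1 => stdRel q l.tail
  cst := fun k => k

theorem map_enc (J : Interp) (ν : ℕ → J.Dom) (l : List ℕ) :
    (l.map encV).map (FTerm.eval J ν) = l.map (fun v => ν (2 * v + 2)) := by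
  rw [List.map_map]
  rfl

theorem sat_std (c : Clause)
    (h : ∀ val : ℕ → ℕ, (∀ a ∈ c.body, stdRel a.1 (a.2.map val)) →
      ∃ val' : ℕ → ℕ, (∀ a ∈ c.body, ∀ v ∈ a.2, val' v = val v) ∧
        stdRel c.head.1 (c.head.2.map val')) :
    c.toRule.sat stdI := by
  intro (ν : ℕ → ℕ) hb
  obtain ⟨val', h1, h2⟩ := h (fun v => ν (2 * v + 2)) (by
    intro a ha
    have := hb ⟨a.1 + 1, encU a :: a.2.map encV⟩ (List.mem_flatMap.2 ⟨a, ha, by simp [encA]⟩)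
    exact Eq.mp (congrArg (stdRel a.1) (map_enc stdI ν a.2)) this)
  refine ⟨fun k => if k % 2 = 0 ∧ k ≠ 0 then val' (k / 2 - 1) else ν k, ?_, ?_⟩
  · rintro v ⟨x, hx, hv⟩
    obtain ⟨a, ha, hxa⟩ := List.mem_flatMap.1 hx
    have key : ∀ t ∈ encU a :: a.2.map encV, t = FTerm.var v →
        (if v % 2 = 0 ∧ v ≠ 0 then val' (v / 2 - 1) else ν v) = ν v := by
      intro t ht e
      subst e
      rcases List.mem_cons.1 ht with h | h
      · simp only [encU, FTerm.var.injEq] at h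
        rw [if_neg (by omega)]
      · obtain ⟨y, hy, hyv⟩ := List.mem_map.1 h
        simp only [encV, FTerm.var.injEq] at hyv
        subst hyv
        rw [if_pos (by omega)]
        have h2 : (2 * y + 2) / 2 - 1 = y := by omega
        rw [h2]
        exact h1 a ha y hy
    simp only [encA, List.mem_cons, List.not_mem_nil, or_false] at hxa
    rcases hxa with rfl | rfl
    · exact key _ hv rfl
    · simp at hv
      exact key _ (by simp [hv]) rfl
  · intro x hx
    simp only [Clause.toRule, List.mem_cons, List.not_mem_nil, or_false] at hx
    rcases hx with rfl | rfl | rfl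
    · have e : c.head.2.map (fun v => (fun k => if k % 2 = 0 ∧ k ≠ 0 then val' (k / 2 - 1) else ν k)
          (2 * v + 2)) = c.head.2.map val' := by
        apply List.map_congr_left
        intro v _
        have h1 : (2 * v + 2) % 2 = 0 := by omega
        have h2 : (2 * v + 2) / 2 - 1 = v := by omega
        simp [h2]
      exact Eq.mpr (congrArg (stdRel c.head.1) ((map_enc stdI _ c.head.2).trans e)) h2
    · trivial
    · trivial

theorem sat_std_of_closed (c : Clause) (h : Closed stdRel c) : c.toRule.sat stdI :=
  sat_std c fun val hb => ⟨val, fun _ _ _ _ => rfl, h val hb⟩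

/-! ### The clauses -/

def E (c : Code) : ℕ := Encodable.encode c + 4

/-- Existential successor clause. -/
def succClause : Clause := ⟨[(1, [0, 1])], (1, [1, 2])⟩

def baseClauses : List Clause :=
  [⟨[(1, [0, 1])], (2, [0, 1])⟩,
   ⟨[(2, [0, 1]), (1, [1, 2])], (2, [0, 2])⟩,
   ⟨[(0, [0])], (3, [0, 0, 0])⟩,
   ⟨[(3, [0, 1, 2]), (1, [2, 3]), (1, [0, 4]), (2, [4, 1])], (3, [4, 1, 3])⟩,
   ⟨[(3, [0, 1, 2]), (1, [2, 3]), (1, [0, 1]), (0, [4])], (3, [1, 4, 3])⟩,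
   ⟨[(3, [0, 1, 2]), (1, [2, 3]), (1, [1, 4]), (2, [1, 0])], (3, [0, 4, 3])⟩,
   ⟨[(3, [0, 0, 2]), (1, [2, 3]), (1, [0, 4]), (0, [5])], (3, [5, 4, 3])⟩]

def codeClauses : Code → List Clause
  | .zero => [⟨[(1, [0, 1]), (0, [2])], (E .zero, [0, 2])⟩]
  | .succ => [⟨[(1, [0, 1])], (E .succ, [0, 1])⟩]
  | .left => [⟨[(3, [0, 1, 2])], (E .left, [2, 0])⟩]
  | .right => [⟨[(3, [0, 1, 2])], (E .right, [2, 1])⟩]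
  | .pair f g => codeClauses f ++ codeClauses g ++
      [⟨[(E f, [0, 1]), (E g, [0, 2]), (3, [1, 2, 3])], (E (.pair f g), [0, 3])⟩]
  | .comp f g => codeClauses f ++ codeClauses g ++
      [⟨[(E g, [0, 1]), (E f, [1, 2])], (E (.comp f g), [0, 2])⟩]
  | .prec f g => codeClauses f ++ codeClauses g ++
      [⟨[(3, [0, 1, 2]), (0, [1]), (E f, [0, 3])], (E (.prec f g), [2, 3])⟩,
       ⟨[(3, [0, 1, 2]), (E (.prec f g), [2, 3]), (3, [1, 3, 4]), (3, [0, 4, 5]),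
         (E g, [5, 6]), (1, [1, 7]), (3, [0, 7, 8])], (E (.prec f g), [8, 6])⟩]
  | .rfind' f => codeClauses f ++
      [⟨[(3, [0, 1, 2]), (E f, [2, 3]), (0, [3])], (E (.rfind' f), [2, 1])⟩,
       ⟨[(3, [0, 1, 2]), (E f, [2, 3]), (1, [4, 3]), (1, [1, 5]), (3, [0, 5, 6]),
         (E (.rfind' f), [6, 7])], (E (.rfind' f), [2, 7])⟩]

theorem datalog_base : ∀ c ∈ baseClauses, Datalog c := by
  simp [baseClauses, Datalog]

theorem datalog_code (u : Code) : ∀ c ∈ codeClauses u, Datalog c := by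
  induction u with
  | zero => simp [codeClauses, Datalog]
  | succ => simp [codeClauses, Datalog]
  | left => simp [codeClauses, Datalog]
  | right => simp [codeClauses, Datalog]
  | pair f g hf hg =>
    intro c hc
    simp only [codeClauses, List.mem_append] at hc
    rcases hc with (h | h) | h
    · exact hf c h
    · exact hg c h
    · revert c; simp [Datalog]
  | comp f g hf hg =>
    intro c hc
    simp only [codeClauses, List.mem_append] at hc
    rcases hc with (h | h) | h
    · exact hf c h
    · exact hg c h
    · revert c; simp [Datalog]
  | prec f g hf hg =>
    intro c hc
    simp only [codeClauses, List.mem_append] at hc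
    rcases hc with (h | h) | h
    · exact hf c h
    · exact hg c h
    · revert c; simp [Datalog]
  | rfind' f hf =>
    intro c hc
    simp only [codeClauses, List.mem_append] at hc
    rcases hc with h | h
    · exact hf c h
    · revert c; simp [Datalog]

/-! ### Facts on evaluation and pairing -/

theorem mem_rfind' (f : Code) (a m r : ℕ) :
    r ∈ eval (.rfind' f) (Nat.pair a m) ↔
      ∃ k, r = k + m ∧ 0 ∈ eval f (Nat.pair a (k + m)) ∧
        ∀ j < k, ∃ y, y + 1 ∈ eval f (Nat.pair a (j + m)) := by
  simp only [eval, Nat.unpaired, Nat.unpair_pair]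
  constructor
  · intro h
    obtain ⟨k, hk, rfl⟩ := (Part.mem_map_iff _).1 h
    obtain ⟨h1, h2⟩ := Nat.mem_rfind.1 hk
    refine ⟨k, rfl, ?_, ?_⟩
    · obtain ⟨x, hx, hx0⟩ := (Part.mem_map_iff _).1 h1
      have : x = 0 := by simpa using hx0
      rwa [this] at hx
    · intro j hj
      obtain ⟨y, hy, hy0⟩ := (Part.mem_map_iff _).1 (h2 hj)
      have : y ≠ 0 := by simpa using hy0
      obtain ⟨z, rfl⟩ := Nat.exists_eq_succ_of_ne_zero this
      exact ⟨z, hy⟩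
  · rintro ⟨k, rfl, h1, h2⟩
    refine (Part.mem_map_iff _).2 ⟨k, Nat.mem_rfind.2 ⟨?_, ?_⟩, rfl⟩
    · exact (Part.mem_map_iff _).2 ⟨0, h1, by simp⟩
    · intro j hj
      obtain ⟨y, hy⟩ := h2 j hj
      exact (Part.mem_map_iff _).2 ⟨y + 1, hy, by simp⟩

theorem mem_pair (f g : Code) (n m : ℕ) :
    m ∈ eval (.pair f g) n ↔ ∃ a ∈ eval f n, ∃ b ∈ eval g n, Nat.pair a b = m := by
  have e : eval (.pair f g) n
      = ((eval f n).map Nat.pair).bind (fun h => (eval g n).map h) := rfl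
  rw [e]
  constructor
  · intro h
    obtain ⟨h, h1, h2⟩ := Part.mem_bind_iff.1 h
    obtain ⟨a, ha, rfl⟩ := (Part.mem_map_iff _).1 h1
    obtain ⟨b, hb, rfl⟩ := (Part.mem_map_iff _).1 h2
    exact ⟨a, ha, b, hb, rfl⟩
  · rintro ⟨a, ha, b, hb, rfl⟩
    exact Part.mem_bind_iff.2 ⟨_, (Part.mem_map_iff _).2 ⟨a, ha, rfl⟩,
      (Part.mem_map_iff _).2 ⟨b, hb, rfl⟩⟩

theorem pair_s1 {a b : ℕ} (h : a + 1 < b) : Nat.pair (a + 1) b = Nat.pair a b + 1 := by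
  rw [Nat.pair, Nat.pair, if_pos h, if_pos (by omega)]; ring
theorem pair_s2 {a : ℕ} : Nat.pair (a + 1) 0 = Nat.pair a (a + 1) + 1 := by
  rw [Nat.pair, Nat.pair, if_neg (by omega), if_pos (by omega)]; ring
theorem pair_s3 {a b : ℕ} (h : b < a) : Nat.pair a (b + 1) = Nat.pair a b + 1 := by
  rw [Nat.pair, Nat.pair, if_neg (by omega), if_neg (by omega)]; ring
theorem pair_s4 {a : ℕ} : Nat.pair 0 (a + 1) = Nat.pair a a + 1 := by
  rw [Nat.pair, Nat.pair, if_pos (by omega), if_neg (by omega)]; ring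

/-! ### Soundness -/

theorem stdRel_E (c : Code) (x y : ℕ) : stdRel (E c) [x, y] ↔ y ∈ eval c x := by
  simp [E, stdRel]

theorem sound_base : ∀ c ∈ baseClauses, Closed stdRel c := by
  simp only [baseClauses, List.forall_mem_cons, Closed, List.map_cons, List.map_nil, stdRel]
  refine ⟨?_, ?_, ?_, ?_, ?_, ?_, ?_, by simp⟩
  · intro val h
    simp at h; omega
  · intro val h
    simp at h; omega
  · intro val h
    simp at h; simp [h, Nat.pair]
  · rintro val ⟨h1, h2, h3, h4, -⟩
    rw [h3] at h4 ⊢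
    rw [h2, h1, pair_s1 h4]
  · rintro val ⟨h1, h2, h3, h4, -⟩
    rw [h2, h1, h3, h4, pair_s2]
  · rintro val ⟨h1, h2, h3, h4, -⟩
    rw [h2, h1, h3, pair_s3 h4]
  · rintro val ⟨h1, h2, h3, h4, -⟩
    rw [h2, h1, h3, h4, pair_s4]

theorem sound_code (u : Code) : ∀ c ∈ codeClauses u, Closed stdRel c := by
  induction u with
  | zero =>
    simp only [codeClauses, List.forall_mem_cons, Closed, List.map_cons, List.map_nil, stdRel_E]
    refine ⟨?_, by simp⟩
    rintro val ⟨-, h, -⟩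
    simp only [stdRel] at h
    rw [h]
    exact Part.mem_some _
  | succ =>
    simp only [codeClauses, List.forall_mem_cons, Closed, List.map_cons, List.map_nil, stdRel_E]
    refine ⟨?_, by simp⟩
    rintro val ⟨h, -⟩
    simp only [stdRel] at h
    rw [h]
    exact Part.mem_some _
  | left =>
    simp only [codeClauses, List.forall_mem_cons, Closed, List.map_cons, List.map_nil, stdRel_E]
    refine ⟨?_, by simp⟩
    rintro val ⟨h, -⟩
    simp only [stdRel] at h
    rw [h]
    simp [eval]
  | right =>
    simp only [codeClauses, List.forall_mem_cons, Closed, List.map_cons, List.map_nil, stdRel_E]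
    refine ⟨?_, by simp⟩
    rintro val ⟨h, -⟩
    simp only [stdRel] at h
    rw [h]
    simp [eval]
  | pair f g hf hg =>
    intro c hc
    simp only [codeClauses, List.mem_append] at hc
    rcases hc with (h | h) | h
    · exact hf c h
    · exact hg c h
    · revert c
      simp only [List.forall_mem_cons, Closed, List.map_cons, List.map_nil, stdRel_E]
      refine ⟨?_, by simp⟩
      rintro val ⟨h1, h2, h3, -⟩
      simp only [stdRel] at h3
      rw [h3]
      exact (mem_pair _ _ _ _).2 ⟨_, h1, _, h2, rfl⟩
  | comp f g hf hg =>
    intro c hc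
    simp only [codeClauses, List.mem_append] at hc
    rcases hc with (h | h) | h
    · exact hf c h
    · exact hg c h
    · revert c
      simp only [List.forall_mem_cons, Closed, List.map_cons, List.map_nil, stdRel_E]
      refine ⟨?_, by simp⟩
      rintro val ⟨h1, h2, -⟩
      exact Part.mem_bind h1 h2
  | prec f g hf hg =>
    intro c hc
    simp only [codeClauses, List.mem_append] at hc
    rcases hc with (h | h) | h
    · exact hf c h
    · exact hg c h
    · revert c
      simp only [List.forall_mem_cons, Closed, List.map_cons, List.map_nil, stdRel_E]
      refine ⟨?_, ?_, by simp⟩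
      · rintro val ⟨h1, h2, h3, -⟩
        simp only [stdRel] at h1 h2
        rw [h1, h2, Nat.Partrec.Code.eval_prec_zero]
        exact h3
      · rintro val ⟨h1, h2, h3, h4, h5, h6, h7, -⟩
        simp only [stdRel] at h1 h3 h4 h6 h7
        rw [h7, h6, Nat.Partrec.Code.eval_prec_succ]
        rw [h1] at h2
        rw [h4, h3] at h5
        exact Part.mem_bind h2 h5
  | rfind' f hf =>
    intro c hc
    simp only [codeClauses, List.mem_append] at hc
    rcases hc with h | h
    · exact hf c h
    · revert c
      simp only [List.forall_mem_cons, Closed, List.map_cons, List.map_nil, stdRel_E]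
      refine ⟨?_, ?_, by simp⟩
      · rintro val ⟨h1, h2, h3, -⟩
        simp only [stdRel] at h1 h3
        rw [h1, h3] at h2
        rw [h1, mem_rfind']
        exact ⟨0, by simp, by simpa using h2, by simp⟩
      · rintro val ⟨h1, h2, h3, h4, h5, h6, -⟩
        simp only [stdRel] at h1 h3 h4 h5
        rw [h5, h4, mem_rfind'] at h6
        rw [h1, h3] at h2
        rw [h1, mem_rfind']
        obtain ⟨k, hk, h0, hj⟩ := h6
        refine ⟨k + 1, by omega, ?_, ?_⟩
        · rwa [show k + 1 + val 1 = k + (val 1 + 1) by omega]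
        · intro j hjk
          rcases j with _ | j
          · exact ⟨_, by simpa using h2⟩
          · rw [show j + 1 + val 1 = j + (val 1 + 1) by omega]
            exact hj j (by omega)

/-! ### Completeness -/

section Complete

variable {D : Type} (H : ℕ → List D → Prop) (rep : ℕ → D)

def valOf (d : D) (l : List D) : ℕ → D := fun k => l.getD k d

theorem use_clause {c : Clause} (h : Closed H c) (d : D) (l : List D)
    (hb : ∀ a ∈ c.body, H a.1 (a.2.map (valOf d l))) :
    H c.head.1 (c.head.2.map (valOf d l)) := h _ hb

theorem complete_lt (hB : ∀ c ∈ baseClauses, Closed H c)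
    (hS : ∀ n, H 1 [rep n, rep (n + 1)]) (a k : ℕ) : H 2 [rep a, rep (a + k + 1)] := by
  simp only [baseClauses, List.forall_mem_cons] at hB
  obtain ⟨h1, h2, -⟩ := hB
  induction k with
  | zero =>
    simpa [valOf] using use_clause H h1 (rep 0) [rep a, rep (a + 1)]
      (by simpa [valOf] using hS a)
  | succ k ih =>
    rw [← Nat.add_assoc a k 1]
    simpa [valOf] using use_clause H h2 (rep 0) [rep a, rep (a + k + 1), rep (a + k + 1 + 1)]
      (by simpa [valOf] using ⟨ih, hS _⟩)

theorem complete_pair (hB : ∀ c ∈ baseClauses, Closed H c) (hZ : H 0 [rep 0])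
    (hS : ∀ n, H 1 [rep n, rep (n + 1)]) (n : ℕ) :
    ∀ a b, Nat.pair a b = n → H 3 [rep a, rep b, rep n] := by
  have hL : ∀ a b, a < b → H 2 [rep a, rep b] := by
    intro a b hab
    obtain ⟨k, rfl⟩ := Nat.exists_eq_add_of_lt hab
    exact complete_lt H rep hB hS a k
  simp only [baseClauses, List.forall_mem_cons] at hB
  obtain ⟨-, -, h0, h1, h2, h3, h4, -⟩ := hB
  suffices hh : ∃ a b, Nat.pair a b = n ∧ H 3 [rep a, rep b, rep n] by
    obtain ⟨a, b, h, hH⟩ := hh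
    intro a' b' h'
    obtain ⟨rfl, rfl⟩ := Nat.pair_eq_pair.1 (h.trans h'.symm)
    exact hH
  induction n with
  | zero =>
    refine ⟨0, 0, by simp [Nat.pair], ?_⟩
    simpa [valOf] using use_clause H h0 (rep 0) [rep 0] (by simpa [valOf] using hZ)
  | succ n ih =>
    obtain ⟨a, b, rfl, hH⟩ := ih
    set n := Nat.pair a b with hn
    rcases lt_trichotomy a b with hab | hab | hab
    · rcases Nat.lt_or_ge (a + 1) b with h | h
      · refine ⟨a + 1, b, pair_s1 h, ?_⟩
        simpa [valOf] using use_clause H h1 (rep 0)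
          [rep a, rep b, rep n, rep (n + 1), rep (a + 1)]
          (by simpa [valOf] using ⟨hH, hS _, hS _, hL _ _ h⟩)
      · obtain rfl : b = a + 1 := by omega
        refine ⟨a + 1, 0, pair_s2, ?_⟩
        simpa [valOf] using use_clause H h2 (rep 0)
          [rep a, rep (a + 1), rep n, rep (n + 1), rep 0]
          (by simpa [valOf] using ⟨hH, hS _, hS _, hZ⟩)
    · subst hab
      refine ⟨0, a + 1, pair_s4, ?_⟩
      simpa [valOf] using use_clause H h4 (rep 0)
          [rep a, rep a, rep n, rep (n + 1), rep (a + 1), rep 0]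
          (by simpa [valOf] using ⟨hH, hS _, hS _, hZ⟩)
    · refine ⟨a, b + 1, pair_s3 hab, ?_⟩
      simpa [valOf] using use_clause H h3 (rep 0)
          [rep a, rep b, rep n, rep (n + 1), rep (b + 1)]
          (by simpa [valOf] using ⟨hH, hS _, hS _, hL _ _ hab⟩)

theorem complete_code (hZ : H 0 [rep 0]) (hS : ∀ n, H 1 [rep n, rep (n + 1)])
    (hP : ∀ a b, H 3 [rep a, rep b, rep (Nat.pair a b)]) (u : Code)
    (hC : ∀ c ∈ codeClauses u, Closed H c) :
    ∀ n m, m ∈ eval u n → H (E u) [rep n, rep m] := by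
  induction u with
  | zero =>
    simp only [codeClauses, List.forall_mem_cons] at hC
    intro n m hm
    obtain rfl : m = 0 := Part.mem_some_iff.1 hm
    simpa [valOf] using use_clause H hC.1 (rep 0) [rep n, rep (n + 1), rep 0]
      (by simpa [valOf] using ⟨hS _, hZ⟩)
  | succ =>
    simp only [codeClauses, List.forall_mem_cons] at hC
    intro n m hm
    obtain rfl : m = n + 1 := Part.mem_some_iff.1 hm
    simpa [valOf] using use_clause H hC.1 (rep 0) [rep n, rep (n + 1)]
      (by simpa [valOf] using hS _)
  | left =>
    simp only [codeClauses, List.forall_mem_cons] at hC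
    intro n m hm
    obtain rfl : m = n.unpair.1 := Part.mem_some_iff.1 hm
    have := hP n.unpair.1 n.unpair.2
    rw [Nat.pair_unpair] at this
    simpa [valOf] using use_clause H hC.1 (rep 0) [rep n.unpair.1, rep n.unpair.2, rep n]
      (by simpa [valOf] using this)
  | right =>
    simp only [codeClauses, List.forall_mem_cons] at hC
    intro n m hm
    obtain rfl : m = n.unpair.2 := Part.mem_some_iff.1 hm
    have := hP n.unpair.1 n.unpair.2
    rw [Nat.pair_unpair] at this
    simpa [valOf] using use_clause H hC.1 (rep 0) [rep n.unpair.1, rep n.unpair.2, rep n]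
      (by simpa [valOf] using this)
  | pair f g hf hg =>
    simp only [codeClauses, List.forall_mem_append, List.forall_mem_cons] at hC
    obtain ⟨⟨cf, cg⟩, h, -⟩ := hC
    intro n m hm
    obtain ⟨a, ha, b, hb, rfl⟩ := (mem_pair _ _ _ _).1 hm
    simpa [valOf] using use_clause H h (rep 0) [rep n, rep a, rep b, rep (Nat.pair a b)]
      (by simpa [valOf] using ⟨hf cf _ _ ha, hg cg _ _ hb, hP a b⟩)
  | comp f g hf hg =>
    simp only [codeClauses, List.forall_mem_append, List.forall_mem_cons] at hC
    obtain ⟨⟨cf, cg⟩, h, -⟩ := hC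
    intro n m hm
    obtain ⟨a, ha, hb⟩ := Part.mem_bind_iff.1 hm
    simpa [valOf] using use_clause H h (rep 0) [rep n, rep a, rep m]
      (by simpa [valOf] using ⟨hg cg _ _ ha, hf cf _ _ hb⟩)
  | prec f g hf hg =>
    simp only [codeClauses, List.forall_mem_append, List.forall_mem_cons] at hC
    obtain ⟨⟨cf, cg⟩, h1, h2, -⟩ := hC
    suffices hh : ∀ k a m, m ∈ eval (.prec f g) (Nat.pair a k) →
        H (E (.prec f g)) [rep (Nat.pair a k), rep m] by
      intro n m hm
      have := hh n.unpair.2 n.unpair.1 m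
      rw [Nat.pair_unpair] at this
      exact this hm
    intro k
    induction k with
    | zero =>
      intro a m hm
      rw [Nat.Partrec.Code.eval_prec_zero] at hm
      simpa [valOf] using use_clause H h1 (rep 0) [rep a, rep 0, rep (Nat.pair a 0), rep m]
        (by simpa [valOf] using ⟨hP _ _, hZ, hf cf _ _ hm⟩)
    | succ k ih =>
      intro a m hm
      rw [Nat.Partrec.Code.eval_prec_succ] at hm
      obtain ⟨y, hy, hm⟩ := Part.mem_bind_iff.1 hm
      simpa [valOf] using use_clause H h2 (rep 0) [rep a, rep k, rep (Nat.pair a k), rep y,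
          rep (Nat.pair k y), rep (Nat.pair a (Nat.pair k y)), rep m, rep (k + 1),
          rep (Nat.pair a (k + 1))]
        (by simpa [valOf] using
          ⟨hP _ _, ih _ _ hy, hP _ _, hP _ _, hg cg _ _ hm, hS _, hP _ _⟩)
  | rfind' f hf =>
    simp only [codeClauses, List.forall_mem_append, List.forall_mem_cons] at hC
    obtain ⟨cf, h1, h2, -⟩ := hC
    suffices hh : ∀ k a m, 0 ∈ eval f (Nat.pair a (k + m)) →
        (∀ j < k, ∃ y, y + 1 ∈ eval f (Nat.pair a (j + m))) →
        H (E (.rfind' f)) [rep (Nat.pair a m), rep (k + m)] by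
      intro n r hr
      rw [← Nat.pair_unpair n, mem_rfind'] at hr
      obtain ⟨k, rfl, h0, hj⟩ := hr
      have := hh k n.unpair.1 n.unpair.2 h0 hj
      rwa [Nat.pair_unpair] at this
    intro k
    induction k with
    | zero =>
      intro a m h0 _
      simp only [Nat.zero_add] at h0 ⊢
      simpa [valOf] using use_clause H h1 (rep 0) [rep a, rep m, rep (Nat.pair a m), rep 0]
        (by simpa [valOf] using ⟨hP _ _, hf cf _ _ h0, hZ⟩)
    | succ k ih =>
      intro a m h0 hj
      obtain ⟨y, hy⟩ := hj 0 (by omega)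
      rw [Nat.zero_add] at hy
      have e : ∀ j, j + 1 + m = j + (m + 1) := by intro j; omega
      rw [e] at h0 ⊢
      have := ih a (m + 1) h0 (by
        intro j hjk
        rw [← e]
        exact hj (j + 1) (by omega))
      simpa [valOf] using use_clause H h2 (rep 0) [rep a, rep m, rep (Nat.pair a m),
          rep (y + 1), rep y, rep (m + 1), rep (Nat.pair a (m + 1)), rep (k + (m + 1))]
        (by simpa [valOf] using ⟨hP _ _, hf cf _ _ hy, hS _, hS _, hP _ _, this⟩)

end Complete

/-! ### The reduction -/

def allClauses (u : Code) : List Clause := succClause :: (baseClauses ++ codeClauses u)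

def rules (u : Code) : List ERule := (allClauses u).map Clause.toRule

def facts (n : ℕ) : List FAtom :=
  ⟨0, [.const 0, .const 0]⟩ :: ⟨1, [.const 0, .const 0]⟩ ::
    (List.range (n + 1)).map (fun i => ⟨2, [.const 0, .const i, .const (i + 1)]⟩)

def query (u : Code) (n : ℕ) : FAtom := ⟨E u + 1, [.var 0, .const n, .var 1]⟩

theorem facts_ground (n : ℕ) : isFactBase (facts n) := by
  intro a ha t ht
  simp only [facts, List.mem_cons, List.mem_map] at ha
  rcases ha with rfl | rfl | ⟨i, -, rfl⟩ <;> simp at ht <;> aesop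

theorem transRule_is (p : ℕ) : isTransitivityRule (transRule p) :=
  ⟨p, 0, 1, 2, by decide, by decide, by decide, rfl, rfl⟩

theorem reduction (u : Code) (n : ℕ) :
    entails (facts n) (rules u ++ [transRule 0]) [query u n] ↔ (eval u n).Dom := by
  constructor
  · intro h
    obtain ⟨ν, hν⟩ := h stdI (by
        intro ν a ha
        simp only [facts, List.mem_cons, List.mem_map] at ha
        rcases ha with rfl | rfl | ⟨i, -, rfl⟩
        · trivial
        · exact (rfl : (0 : ℕ) = 0)
        · exact (rfl : i + 1 = i + 1)) (by
        intro r hr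
        rcases List.mem_append.1 hr with hr | hr
        · obtain ⟨c, hc, rfl⟩ := List.mem_map.1 hr
          rcases List.mem_cons.1 hc with rfl | hc
          · apply sat_std
            intro val _
            refine ⟨fun k => if k = 2 then val 1 + 1 else val k, ?_, ?_⟩
            · simp [succClause]
            · simp [succClause, stdRel]
          · apply sat_std_of_closed
            rcases List.mem_append.1 hc with hc | hc
            · exact sound_base c hc
            · exact sound_code u c hc
        · obtain rfl := List.mem_singleton.1 hr
          intro ν _
          refine ⟨ν, fun _ _ => rfl, ?_⟩
          intro a ha
          obtain rfl := List.mem_singleton.1 ha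
          trivial)
    have := hν _ (List.mem_singleton.2 rfl)
    have h2 : stdRel (E u) [n, ν 1] := this
    exact Part.dom_iff_mem.2 ⟨_, (stdRel_E u n (ν 1)).1 h2⟩
  · intro h J hF hR
    obtain ⟨m, hm⟩ := Part.dom_iff_mem.1 h
    have ht : (transRule 0).sat J := hR _ (by simp)
    have hcl : ∀ c ∈ allClauses u, c.toRule.sat J := fun c hc =>
      hR _ (List.mem_append_left _ (List.mem_map.2 ⟨c, hc, rfl⟩))
    have hB : ∀ c ∈ baseClauses, Closed (holds J) c := fun c hc =>
      closed_of_sat ht c (hcl c (by simp [allClauses, hc])) (datalog_base c hc)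
    have hC : ∀ c ∈ codeClauses u, Closed (holds J) c := fun c hc =>
      closed_of_sat ht c (hcl c (by simp [allClauses, hc])) (datalog_code u c hc)
    have ν0 : ℕ → J.Dom := fun _ => J.cst 0
    have hp : J.rel 0 [J.cst 0, J.cst 0] := hF ν0 ⟨0, [.const 0, .const 0]⟩ (by simp [facts])
    have hZ : holds J 0 [J.cst 0] :=
      ⟨J.cst 0, hF ν0 ⟨1, [.const 0, .const 0]⟩ (by simp [facts]), hp⟩
    have hSF : ∀ i ≤ n, holds J 1 [J.cst i, J.cst (i + 1)] := fun i hi =>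
      ⟨J.cst 0, hF ν0 ⟨2, [.const 0, .const i, .const (i + 1)]⟩
        (by simp [facts]; omega), hp⟩
    have hstep : ∀ x y, holds J 1 [x, y] → ∃ z, holds J 1 [y, z] := by
      intro x y hxy
      obtain ⟨val', h1, h2⟩ := clause_complete ht succClause (hcl _ (by simp [allClauses]))
        (valOf x [x, y]) (by simpa [succClause, valOf] using hxy)
      have := h1 (1, [0, 1]) (by simp [succClause]) 1 (by simp)
      simp [succClause, this, valOf] at h2
      exact ⟨_, h2⟩
    -- extend the chain of constants
    let T := {p : J.Dom × J.Dom // holds J 1 [p.1, p.2]}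
    let nxt : T → T := fun p =>
      ⟨(p.1.2, (hstep _ _ p.2).choose), (hstep _ _ p.2).choose_spec⟩
    let st : T := ⟨(J.cst n, J.cst (n + 1)), hSF n le_rfl⟩
    let rep : ℕ → J.Dom := fun k => if k ≤ n then J.cst k else (nxt^[k - n] st).1.1
    have hit : ∀ k, (nxt^[k + 1] st).1.1 = (nxt^[k] st).1.2 := by
      intro k
      rw [Function.iterate_succ_apply']
    have hS : ∀ k, holds J 1 [rep k, rep (k + 1)] := by
      intro k
      rcases lt_trichotomy k n with hk | hk | hk
      · simp only [rep, if_pos hk.le, if_pos (show k + 1 ≤ n from hk)]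
        exact hSF k hk.le
      · subst hk
        simp only [rep, if_pos le_rfl, if_neg (show ¬ k + 1 ≤ k by omega)]
        rw [show k + 1 - k = 0 + 1 by omega, hit]
        exact st.2
      · simp only [rep, if_neg (show ¬ k ≤ n by omega), if_neg (show ¬ k + 1 ≤ n by omega)]
        rw [show k + 1 - n = (k - n) + 1 by omega, hit]
        exact (nxt^[k - n] st).2
    have hr0 : rep 0 = J.cst 0 := by simp [rep]
    have hrn : rep n = J.cst n := by simp [rep]
    have hZ' : holds J 0 [rep 0] := by rw [hr0]; exact hZ
    have hE := complete_code (holds J) rep hZ' hS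
      (fun a b => complete_pair (holds J) rep hB hZ' hS _ a b rfl) u hC n m hm
    rw [hrn] at hE
    obtain ⟨w, hw, -⟩ := hE
    refine ⟨fun k => if k = 0 then w else rep m, ?_⟩
    intro a ha
    obtain rfl := List.mem_singleton.1 ha
    simpa [query, FAtom.sat, FTerm.eval] using hw

/-! ### Computability of the reduction -/

theorem primrec_const : Primrec FTerm.const :=
  (Primrec.of_equiv_symm (e := FTerm.equivSum)).comp (Primrec.sumInr (α := ℕ) (β := ℕ))

theorem primrec_mk {α : Type} [Primcodable α] (q : ℕ) {f : α → List FTerm} (hf : Primrec f) :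
    Primrec (fun a => FAtom.mk q (f a)) :=
  (Primrec.of_equiv_symm (e := FAtom.equivProd)).comp ((Primrec.const q).pair hf)

theorem primrec_query (u : Code) : Primrec (query u) :=
  primrec_mk _ (Primrec.list_cons.comp (Primrec.const _)
    (Primrec.list_cons.comp primrec_const (Primrec.const _)))

theorem primrec_facts : Primrec facts := by
  refine Primrec.list_cons.comp (Primrec.const _) (Primrec.list_cons.comp (Primrec.const _) ?_)
  refine Primrec.list_map (Primrec.list_range.comp Primrec.succ) ?_
  have : Primrec (fun p : ℕ × ℕ =>
      FAtom.mk 2 [FTerm.const 0, FTerm.const p.2, FTerm.const (p.2 + 1)]) := by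
    refine primrec_mk 2 ?_
    exact Primrec.list_cons.comp (Primrec.const _) (Primrec.list_cons.comp
    (primrec_const.comp Primrec.snd) (Primrec.list_cons.comp
      (primrec_const.comp (Primrec.succ.comp Primrec.snd)) (Primrec.const _)))
  exact this

theorem exists_univ : ∃ u : Code, ∀ c : Code,
    eval u (Encodable.encode c) = eval c 0 := by
  have h : Partrec (fun n : ℕ => eval (Denumerable.ofNat Code n) 0) :=
    Nat.Partrec.Code.eval_part.comp (Computable.ofNat Code) (Computable.const 0)
  obtain ⟨u, hu⟩ := Nat.Partrec.Code.exists_code.1 (Partrec.nat_iff.1 h)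
  exact ⟨u, fun c => by rw [hu]; simp⟩

end AgrdTrans

/-- Atomic CQ entailment over aGRD+trans knowledge bases is undecidable,
even with a single transitivity rule: no computable (Boolean-valued) function correctly
decides, for every fact base `F`, every aGRD rule set `Rs`, every transitivity rule `Rt`
and every atomic CQ `Q`, whether `F, Rs ∪ {Rt} ⊨ Q`. -/
theorem agrd_plus_trans_atomicCQ_undecidable :
    ¬ ∃ f : List FAtom × List ERule × ERule × FAtom → Bool, Computable f ∧
      ∀ (F : List FAtom) (Rs : List ERule) (Rt : ERule) (Q : FAtom),
        isFactBase F → isAGRD Rs → isTransitivityRule Rt →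
        (f (F, Rs, Rt, Q) = true ↔ entails F (Rs ++ [Rt]) [Q]) := by
  rintro ⟨f, hf, hdec⟩
  obtain ⟨u, hu⟩ := AgrdTrans.exists_univ
  apply ComputablePred.halting_problem 0
  refine ComputablePred.computable_iff.2
    ⟨fun c => f (AgrdTrans.facts (Encodable.encode c), AgrdTrans.rules u, transRule 0,
      AgrdTrans.query u (Encodable.encode c)), ?_, ?_⟩
  · refine hf.comp (Primrec.to_comp ?_)
    exact (AgrdTrans.primrec_facts.comp Primrec.encode).pair
      ((Primrec.const _).pair ((Primrec.const _).pair
        ((AgrdTrans.primrec_query u).comp Primrec.encode)))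
  · funext c
    apply propext
    rw [← hu c, ← AgrdTrans.reduction u]
    exact (hdec _ _ _ _ (AgrdTrans.facts_ground _) (AgrdTrans.agrd _)
      (AgrdTrans.transRule_is 0)).symm
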